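/- Let q, q̃ be real-valued Lebesgue-integrable functions on [0,T], h, h̃ ∈ ℝ, with associated solutions S, φ and S̃, φ̃. Let M : ℂ → ℂ be any function and set Φ(x,λ) = S(x,λ) + M(λ)·φ(x,λ) and Φ̃(x,λ) = S̃(x,λ) + M(λ)·φ̃(x,λ) (the same M for both). Fix δ ∈ (0,π/2) and suppose there exist constants K > 0 and R ≥ 1 such that for all ρ with arg ρ ∈ [δ, π−δ] and |ρ| ≥ R and all x ∈ [0,T]: |Φ(x,ρ²) − (iρ)^{−1} e^{iρx}| ≤ K|ρ|^{−2} e^{−τx}, |Φ'(x,ρ²) − e^{iρx}| ≤ K|ρ|^{−1} e^{−τx}, and the same two bounds hold for Φ̃, Φ̃', where τ = Im ρ. Then q(x) = q̃(x) for almost every x ∈ [0,T] and h = h̃. -/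

import Mathlib

/-!
The function `P = Φ φ̃ - φ Φ̃` does not involve `M`: it equals `S φ̃ - φ S̃`. For fixed `x` it is
therefore entire in `λ` (`entire_of_sol`), and as a function of `ρ`, where `λ = ρ²`, it is even and
of exponential type (`sol_growth`). In the sector `δ ≤ arg ρ ≤ π - δ` the decay of `Φ`, `Φ̃`
compensates the growth of `φ`, `φ̃`, so that `P = O(1/|ρ|)` there. The complementary sectors have
opening `2δ < π`, so Phragmén–Lindelöf and Liouville give `P = 0` (`eq_zero_of_sector_decay`).

Now fix one `ρ = i r` with `r` so large that `Φ` and `Φ̃` are closer to the free Weyl solution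
`e = (iρ)⁻¹ e^{iρx}` than `|e|`; in particular `Φ` has no zeros. Differentiating `Φ φ̃ = φ Φ̃` in `x`
and using that both Wronskians `φ Φ' - φ' Φ` and `φ̃ Φ̃' - φ̃' Φ̃` are `1` (`wronskian`) gives
`Φ² = Φ̃²`, and closeness to `e` excludes `Φ = -Φ̃`. From `Φ = Φ̃` follow `Φ' = Φ̃'` and then, by
the equations, `(q - q̃) Φ = 0` a.e., so `q = q̃` a.e.; moreover `φ = φ̃`, and
`h = φ'(0) = φ̃'(0) = h̃`.

All calculus is done with `Prim`, absolutely continuous functions presented as primitives; its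
product rule is `Prim.mul`. The a priori bounds rest on a Grönwall inequality with integrable kernel
(`gronwall_L1`), and `SLSol.prim` shows that the integrals in `SLSol` are integrals of integrable
functions.
-/

open MeasureTheory Set Complex

/-- `SLSol q T lam y y'` means: on `[0,T]`, `y` and `y'` are absolutely continuous,
`y'` is the derivative of `y`, and `-y'' + q y = lam y` holds a.e., expressed in
the equivalent integral (Carathéodory) form. -/
def SLSol (q : ℝ → ℝ) (T : ℝ) (lam : ℂ) (y y' : ℝ → ℂ) : Prop :=
  (∀ x ∈ Icc (0:ℝ) T, y x = y 0 + ∫ t in (0:ℝ)..x, y' t) ∧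
  (∀ x ∈ Icc (0:ℝ) T, y' x = y' 0 + ∫ t in (0:ℝ)..x, ((q t : ℂ) - lam) * y t)

/-! ### Absolutely continuous functions as primitives -/

/-- `Prim T f g`: on `[0,T]` the function `f` is absolutely continuous with a.e. derivative `g`,
expressed as `f` being a primitive of the integrable function `g`. -/
def Prim (T : ℝ) (f g : ℝ → ℂ) : Prop :=
  IntervalIntegrable g volume 0 T ∧ ∀ x ∈ Icc (0:ℝ) T, f x = f 0 + ∫ t in (0:ℝ)..x, g t

lemma Prim.continuousOn {T : ℝ} {f g : ℝ → ℂ} (hT : 0 ≤ T) (hf : Prim T f g) :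
    ContinuousOn f (Icc 0 T) := by
  have h1 : ContinuousOn (fun x => f 0 + ∫ t in (0:ℝ)..x, g t) (Icc 0 T) := by
    have := intervalIntegral.continuousOn_primitive_interval (μ := volume) (f := g)
      (a := (0:ℝ)) (b := T)
      (by rw [uIcc_of_le hT, integrableOn_Icc_iff_integrableOn_Ioc]
          exact (intervalIntegrable_iff_integrableOn_Ioc_of_le hT).1 hf.1)
    rw [uIcc_of_le hT] at this
    exact continuousOn_const.add this
  exact h1.congr hf.2

lemma Prim.add {T : ℝ} {f g F G : ℝ → ℂ} (hf : Prim T f g) (hF : Prim T F G) :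
    Prim T (fun x => f x + F x) (fun x => g x + G x) := by
  refine ⟨hf.1.add hF.1, fun x hx => ?_⟩
  have hs : uIcc 0 x ⊆ uIcc 0 T := by
    rw [uIcc_of_le hx.1, uIcc_of_le (hx.1.trans hx.2)]; exact Icc_subset_Icc_right hx.2
  rw [intervalIntegral.integral_add (hf.1.mono_set hs) (hF.1.mono_set hs)]
  simp only
  rw [hf.2 x hx, hF.2 x hx]; ring

lemma Prim.const_mul {T : ℝ} {f g : ℝ → ℂ} (c : ℂ) (hf : Prim T f g) :
    Prim T (fun x => c * f x) (fun x => c * g x) := by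
  refine ⟨hf.1.const_mul c, fun x hx => ?_⟩
  rw [intervalIntegral.integral_const_mul]
  simp only
  rw [hf.2 x hx]; ring

lemma Prim.congr_right {T : ℝ} {f g G : ℝ → ℂ} (hf : Prim T f g) (h : ∀ x, g x = G x) :
    Prim T f G := by
  obtain rfl : g = G := funext h
  exact hf

lemma ac_const (c : ℂ) (a b : ℝ) : AbsolutelyContinuousOnInterval (fun _ : ℝ => c) a b :=
  (LipschitzWith.const c).lipschitzOnWith.absolutelyContinuousOnInterval

lemma ac_primitive {T : ℝ} {g : ℝ → ℂ} (hg : IntervalIntegrable g volume 0 T) :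
    AbsolutelyContinuousOnInterval (fun x => ∫ t in (0:ℝ)..x, g t) 0 T := by
  have hre : IntervalIntegrable (fun t => (g t).re) volume 0 T :=
    ⟨hg.1.re, hg.2.re⟩
  have him : IntervalIntegrable (fun t => (g t).im) volume 0 T :=
    ⟨hg.1.im, hg.2.im⟩
  have h1 := (hre.absolutelyContinuousOnInterval_intervalIntegral (c := 0) (by simp)).fun_smul
    (ac_const 1 0 T)
  have h2 := (him.absolutelyContinuousOnInterval_intervalIntegral (c := 0) (by simp)).fun_smul
    (ac_const I 0 T)
  have h3 := h1.fun_add h2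
  have key : ∀ x ∈ uIcc 0 T, (∫ t in (0:ℝ)..x, g t)
      = (∫ t in (0:ℝ)..x, (g t).re) • (1:ℂ) + (∫ t in (0:ℝ)..x, (g t).im) • I := by
    intro x hx
    have hs : uIcc 0 x ⊆ uIcc 0 T := uIcc_subset_uIcc_left hx
    have e : ∀ t, g t = ((g t).re : ℂ) * 1 + ((g t).im : ℂ) * I := fun t => by simp [re_add_im]
    conv_lhs => rw [intervalIntegral.integral_congr (fun t _ => e t)]
    rw [intervalIntegral.integral_add, intervalIntegral.integral_mul_const,
      intervalIntegral.integral_mul_const, intervalIntegral.integral_ofReal,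
      intervalIntegral.integral_ofReal]
    · simp
    · exact IntervalIntegrable.mul_const
        ⟨(hre.mono_set hs).1.ofReal, (hre.mono_set hs).2.ofReal⟩ _
    · exact IntervalIntegrable.mul_const
        ⟨(him.mono_set hs).1.ofReal, (him.mono_set hs).2.ofReal⟩ _
  -- `key` gives equality on `[0,T]` only, which is all the definition looks at
  rw [absolutelyContinuousOnInterval_iff] at h3 ⊢
  intro ε hε
  obtain ⟨d, hd, H⟩ := h3 ε hε
  refine ⟨d, hd, fun E hE hl => ?_⟩
  refine lt_of_eq_of_lt (Finset.sum_congr rfl fun i hi => ?_) (H E hE hl)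
  rw [key _ (hE.1 i hi).1, key _ (hE.1 i hi).2]

/-- Product rule for absolutely continuous functions. -/
lemma Prim.mul {T : ℝ} {f g F G : ℝ → ℂ} (hT : 0 ≤ T) (hf : Prim T f g) (hF : Prim T F G) :
    Prim T (fun x => f x * F x) (fun x => g x * F x + f x * G x) := by
  have hint : IntervalIntegrable (fun x => g x * F x + f x * G x) volume 0 T := by
    refine (hf.1.mul_continuousOn ?_).add (hF.1.continuousOn_mul ?_) <;> rw [uIcc_of_le hT]
    · exact hF.continuousOn hT
    · exact hf.continuousOn hT
  refine ⟨hint, ?_⟩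
  have hP : AbsolutelyContinuousOnInterval (fun x => f 0 + ∫ t in (0:ℝ)..x, g t) 0 T :=
    (ac_const _ _ _).fun_add (ac_primitive hf.1)
  have hQ : AbsolutelyContinuousOnInterval (fun x => F 0 + ∫ t in (0:ℝ)..x, G t) 0 T :=
    (ac_const _ _ _).fun_add (ac_primitive hF.1)
  have hD := (hP.fun_smul hQ).fun_sub (ac_primitive hint)
  obtain ⟨c, hc⟩ := hD.const_of_ae_hasDerivAt_zero (by
    filter_upwards [hf.1.ae_hasDerivAt_integral, hF.1.ae_hasDerivAt_integral,
      hint.ae_hasDerivAt_integral] with x h1 h2 h3 hx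
    have := (((h1 hx 0 (by simp)).const_add (f 0)).mul
      ((h2 hx 0 (by simp)).const_add (F 0))).sub (h3 hx 0 (by simp))
    rw [uIcc_of_le hT] at hx
    rw [← hf.2 x hx, ← hF.2 x hx] at this
    rw [sub_self] at this
    exact this)
  intro x hx
  have h0 := hc 0 (by simp)
  have hx' := hc x (by rwa [uIcc_of_le hT])
  rw [← h0, ← hf.2 x hx, ← hF.2 x hx] at hx'
  simp only [intervalIntegral.integral_same, add_zero, smul_eq_mul, sub_zero] at hx'
  simp only
  rw [← hx']
  ring

/-! ### Grönwall inequality, a priori bounds and regularity of solutions -/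

/-- Grönwall's inequality with an integrable kernel; the constant depends on the kernel only. -/
lemma gronwall_L1 {T : ℝ} (hT : 0 ≤ T) {k : ℝ → ℝ} (hk : IntervalIntegrable k volume 0 T)
    (hk0 : ∀ x, 0 ≤ k x) :
    ∃ A : ℝ, 0 < A ∧ ∀ X ∈ Icc 0 T, ∀ c : ℝ, 0 ≤ c → ∀ u : ℝ → ℝ, ContinuousOn u (Icc 0 X) →
      (∀ x ∈ Icc 0 X, 0 ≤ u x) →
      (∀ x ∈ Icc 0 X, u x ≤ c + ∫ t in (0:ℝ)..x, k t * u t) → ∀ x ∈ Icc 0 X, u x ≤ A * c := by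
  set κ : ℝ → ℝ := fun x => ∫ t in (0:ℝ)..x, k t with hκ
  have hsub : ∀ x ∈ Icc 0 T, uIcc 0 x ⊆ uIcc 0 T := fun x hx =>
    uIcc_subset_uIcc_left (by rwa [uIcc_of_le hT])
  have hmono : ∀ x ∈ Icc 0 T, ∀ y ∈ Icc 0 T, x ≤ y → κ x ≤ κ y := by
    intro x hx y hy hxy
    have : κ y - κ x = ∫ t in x..y, k t :=
      intervalIntegral.integral_interval_sub_left (hk.mono_set (hsub y hy))
        (hk.mono_set (hsub x hx))
    have h2 : 0 ≤ ∫ t in x..y, k t := intervalIntegral.integral_nonneg hxy (fun t _ => hk0 t)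
    linarith
  have hκ0 : κ 0 = 0 := by simp [hκ]
  have hκc : ContinuousOn κ (Icc 0 T) := by
    have := intervalIntegral.continuousOn_primitive_interval (μ := volume) (f := k)
      (a := (0:ℝ)) (b := T)
      (by rw [uIcc_of_le hT, integrableOn_Icc_iff_integrableOn_Ioc]
          exact (intervalIntegrable_iff_integrableOn_Ioc_of_le hT).1 hk)
    rwa [uIcc_of_le hT] at this
  -- `2 k e^{2κ}` is the a.e. derivative of the monotone function `e^{2κ}`
  have hexp : ∀ x ∈ Icc 0 T,
      ∫ t in (0:ℝ)..x, k t * Real.exp (2 * κ t) ≤ Real.exp (2 * κ x) / 2 - 1 / 2 := by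
    intro x hx
    have hm : MonotoneOn (fun t => Real.exp (2 * κ t)) (uIcc 0 x) := by
      intro s hs t ht hst
      rw [uIcc_of_le hx.1] at hs ht
      have := hmono s ⟨hs.1, hs.2.trans hx.2⟩ t ⟨ht.1, ht.2.trans hx.2⟩ hst
      simp only; gcongr
    have h1 := hm.intervalIntegral_deriv_mem_uIcc
    have h2 : ∫ t in (0:ℝ)..x, deriv (fun t => Real.exp (2 * κ t)) t
        = ∫ t in (0:ℝ)..x, 2 * (k t * Real.exp (2 * κ t)) := by
      apply intervalIntegral.integral_congr_ae
      filter_upwards [(hk.mono_set (hsub x hx)).ae_hasDerivAt_integral] with t h3 h4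
      have h5 : HasDerivAt κ (k t) t := h3 (uIoc_subset_uIcc h4) 0 (by simp)
      rw [((h5.const_mul 2).exp).deriv]; ring
    rw [h2, intervalIntegral.integral_const_mul] at h1
    have h3 := hm (a := 0) (b := x) (by simp) (by simp) hx.1
    rw [uIcc_of_le (by simpa using h3)] at h1
    have := h1.2
    simp only [hκ0, mul_zero, Real.exp_zero] at this
    linarith
  refine ⟨2 * Real.exp (2 * κ T), by positivity, ?_⟩
  intro X hX c hc u hu hu0 hub x hx
  have hXs : Icc 0 X ⊆ Icc 0 T := Icc_subset_Icc_right hX.2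
  have hgc : ContinuousOn (fun t => u t * Real.exp (-(2 * κ t))) (Icc 0 X) :=
    hu.mul (Real.continuous_exp.comp_continuousOn ((hκc.mono hXs).const_smul (2:ℝ)).neg)
  obtain ⟨z, hz, hmax⟩ := isCompact_Icc.exists_isMaxOn ⟨0, left_mem_Icc.2 hX.1⟩ hgc
  set m := u z * Real.exp (-(2 * κ z)) with hm
  have hle : ∀ t ∈ Icc 0 X, u t ≤ m * Real.exp (2 * κ t) := by
    intro t ht
    have : u t * Real.exp (-(2 * κ t)) ≤ m := hmax ht
    rw [Real.exp_neg, ← div_eq_mul_inv, div_le_iff₀ (Real.exp_pos _)] at this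
    exact this
  have hm0 : 0 ≤ m := mul_nonneg (hu0 z hz) (Real.exp_pos _).le
  have hzs : uIcc 0 z ⊆ uIcc 0 T := hsub z (hXs hz)
  have hzI : uIcc 0 z ⊆ Icc 0 X := by
    rw [uIcc_of_le hz.1]; exact Icc_subset_Icc_right hz.2
  have hi1 : IntervalIntegrable (fun t => k t * u t) volume 0 z :=
    (hk.mono_set hzs).mul_continuousOn (hu.mono hzI)
  have hi2 : IntervalIntegrable (fun t => k t * Real.exp (2 * κ t)) volume 0 z :=
    (hk.mono_set hzs).mul_continuousOn
      (Real.continuous_exp.comp_continuousOn ((hκc.mono (hzI.trans hXs)).const_smul (2:ℝ)))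
  have h1 : ∫ t in (0:ℝ)..z, k t * u t ≤ ∫ t in (0:ℝ)..z, m * (k t * Real.exp (2 * κ t)) := by
    apply intervalIntegral.integral_mono_on hz.1 hi1 (hi2.const_mul m)
    intro t ht
    have := mul_le_mul_of_nonneg_left (hle t ⟨ht.1, ht.2.trans hz.2⟩) (hk0 t)
    linarith
  rw [intervalIntegral.integral_const_mul] at h1
  have h2 := mul_le_mul_of_nonneg_left (hexp z (hXs hz)) hm0
  have h3 := hub z hz
  have h4 : u z = m * Real.exp (2 * κ z) := by
    rw [hm, mul_assoc, ← Real.exp_add]; simp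
  have h5 : 1 ≤ Real.exp (2 * κ z) := by
    have := hmono 0 (left_mem_Icc.2 hT) z (hXs hz) hz.1
    rw [hκ0] at this
    exact Real.one_le_exp (by linarith)
  have h6 : m ≤ 2 * c := by
    have e1 : m * Real.exp (2 * κ z) ≤ 2 * c := by nlinarith
    nlinarith
  have h7 : Real.exp (2 * κ x) ≤ Real.exp (2 * κ T) := by
    have := hmono x (hXs hx) T (right_mem_Icc.2 hT) (hXs hx).2
    gcongr
  calc u x ≤ m * Real.exp (2 * κ x) := hle x hx
    _ ≤ (2 * c) * Real.exp (2 * κ T) := by gcongr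
    _ = _ := by ring

lemma coeff_intervalIntegrable {T X : ℝ} {q : ℝ → ℝ} (hq : IntegrableOn q (Icc 0 T))
    (hX : X ∈ Icc 0 T) : IntervalIntegrable q volume 0 X := by
  rw [intervalIntegrable_iff_integrableOn_Icc_of_le hX.1]
  exact hq.mono_set (Icc_subset_Icc_right hX.2)

lemma Prim.norm_le {T : ℝ} {f g : ℝ → ℂ} (hf : Prim T f g) {x : ℝ} (hx : x ∈ Icc 0 T) :
    ‖f x‖ ≤ ‖f 0‖ + ∫ t in (0:ℝ)..x, ‖g t‖ := by
  rw [hf.2 x hx]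
  exact (norm_add_le _ _).trans (by gcongr; exact intervalIntegral.norm_integral_le_integral_norm hx.1)

/-- A priori bound for solutions, uniform for `λ` in a disc and for the length of the interval. -/
lemma sl_bound {T : ℝ} (hT : 0 ≤ T) {q : ℝ → ℝ} (hq : IntegrableOn q (Icc 0 T)) {L : ℝ}
    (hL : 0 ≤ L) :
    ∃ A : ℝ, 0 < A ∧ ∀ X ∈ Icc 0 T, ∀ lam : ℂ, ‖lam‖ ≤ L → ∀ y y' : ℝ → ℂ, Prim X y y' →
      Prim X y' (fun t => ((q t : ℂ) - lam) * y t) →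
      ∀ x ∈ Icc 0 X, ‖y x‖ + ‖y' x‖ ≤ A * (‖y 0‖ + ‖y' 0‖) := by
  have hk : IntervalIntegrable (fun t => 1 + |q t| + L) volume 0 T :=
    (intervalIntegrable_const.add (coeff_intervalIntegrable hq ⟨hT, le_rfl⟩).abs).add intervalIntegrable_const
  obtain ⟨A, hA, H⟩ := gronwall_L1 hT hk (fun x => by positivity)
  refine ⟨A, hA, fun X hX lam hlam y y' hy hy' => ?_⟩
  have hyc := hy.continuousOn hX.1
  have hyc' := hy'.continuousOn hX.1
  refine H X hX _ (by positivity) (fun x => ‖y x‖ + ‖y' x‖) (hyc.norm.add hyc'.norm)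
    (fun x _ => by positivity) (fun x hx => ?_)
  have hs : uIcc 0 x ⊆ uIcc 0 X := uIcc_subset_uIcc_left (by rwa [uIcc_of_le hX.1])
  have hs' : uIcc 0 x ⊆ Icc 0 X := by rwa [uIcc_of_le hX.1] at hs
  have hsT : uIcc 0 x ⊆ uIcc 0 T := hs.trans (uIcc_subset_uIcc_left (by rwa [uIcc_of_le hT]))
  have h1 := hy.norm_le hx
  have h2 := hy'.norm_le hx
  have i1 := (hy.1.mono_set hs).norm
  have i2 := (hy'.1.mono_set hs).norm
  have h3 : (∫ t in (0:ℝ)..x, ‖y' t‖) + ∫ t in (0:ℝ)..x, ‖((q t : ℂ) - lam) * y t‖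
      ≤ ∫ t in (0:ℝ)..x, (1 + |q t| + L) * (‖y t‖ + ‖y' t‖) := by
    rw [← intervalIntegral.integral_add i1 i2]
    apply intervalIntegral.integral_mono_on hx.1 (i1.add i2)
    · exact (hk.mono_set hsT).mul_continuousOn ((hyc.norm.add hyc'.norm).mono hs')
    · intro t _
      have h4 : ‖(q t : ℂ) - lam‖ ≤ |q t| + L :=
        (norm_sub_le _ _).trans (by rw [Complex.norm_real, Real.norm_eq_abs]; gcongr)
      rw [norm_mul]
      have h5 := mul_le_mul_of_nonneg_right h4 (norm_nonneg (y t))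
      have h6 : 0 ≤ (|q t| + L) * ‖y' t‖ := by positivity
      nlinarith [norm_nonneg (y t)]
  linarith

/-- A pair satisfying the integral equations `SLSol` is a genuine Carathéodory solution: the
integrals are those of integrable functions. A non-integrable integrand has Bochner integral `0`,
so this needs an argument: the set of `x` for which both integrands are integrable on `[0,x]` is
closed by the a priori bound, and it cannot end before `T`, since beyond its last point `y'` would
be constant, hence integrable. -/
lemma SLSol.prim {T : ℝ} (hT : 0 ≤ T) {q : ℝ → ℝ} (hq : IntegrableOn q (Icc 0 T)) {lam : ℂ}
    {y y' : ℝ → ℂ} (h : SLSol q T lam y y') :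
    Prim T y y' ∧ Prim T y' (fun t => ((q t : ℂ) - lam) * y t) := by
  obtain ⟨A, hA, hbd⟩ := sl_bound hT hq (norm_nonneg lam)
  set f : ℝ → ℂ := fun t => ((q t : ℂ) - lam) * y t with hf
  have pA : ∀ x ∈ Icc 0 T, IntervalIntegrable y' volume 0 x → Prim x y y' :=
    fun x hx hi => ⟨hi, fun z hz => h.1 z ⟨hz.1, hz.2.trans hx.2⟩⟩
  have pB : ∀ x ∈ Icc 0 T, IntervalIntegrable f volume 0 x → Prim x y' f :=
    fun x hx hi => ⟨hi, fun z hz => h.2 z ⟨hz.1, hz.2.trans hx.2⟩⟩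
  -- integrability of one function yields integrability of the other
  have BA : ∀ x ∈ Icc 0 T, IntervalIntegrable f volume 0 x → IntervalIntegrable y' volume 0 x := by
    intro x hx hi
    have := (pB x hx hi).continuousOn hx.1
    rw [← uIcc_of_le hx.1] at this
    exact this.intervalIntegrable
  have hqc : ∀ x ∈ Icc 0 T, IntervalIntegrable (fun t => (q t : ℂ) - lam) volume 0 x := by
    intro x hx
    have h1 := coeff_intervalIntegrable hq hx
    exact IntervalIntegrable.sub ⟨h1.1.ofReal, h1.2.ofReal⟩ intervalIntegrable_const
  have AB : ∀ x ∈ Icc 0 T, IntervalIntegrable y' volume 0 x → IntervalIntegrable f volume 0 x := by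
    intro x hx hi
    have := (pA x hx hi).continuousOn hx.1
    rw [← uIcc_of_le hx.1] at this
    exact (hqc x hx).mul_continuousOn this
  suffices hTT : IntervalIntegrable y' volume 0 T from
    ⟨pA T ⟨hT, le_rfl⟩ hTT, pB T ⟨hT, le_rfl⟩ (AB T ⟨hT, le_rfl⟩ hTT)⟩
  set Z : Set ℝ := {x ∈ Icc 0 T | IntervalIntegrable y' volume 0 x} with hZ
  have h0Z : (0:ℝ) ∈ Z := ⟨⟨le_rfl, hT⟩, by simp⟩
  have hZb : BddAbove Z := ⟨T, fun x hx => hx.1.2⟩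
  set s := sSup Z with hs
  have hs0 : 0 ≤ s := le_csSup hZb h0Z
  have hsT : s ≤ T := csSup_le ⟨0, h0Z⟩ fun x hx => hx.1.2
  have hbelow : ∀ x, 0 ≤ x → x < s → ∃ z ∈ Z, x < z := fun x _ hx =>
    exists_lt_of_lt_csSup ⟨0, h0Z⟩ hx
  have hcont : ContinuousOn y' (Ico 0 s) := by
    intro x hx
    obtain ⟨z, hz, hxz⟩ := hbelow x hx.1 hx.2
    have h1 := (pB z hz.1 (AB z hz.1 hz.2)).continuousOn hz.1.1 x ⟨hx.1, hxz.le⟩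
    refine (h1.mono_of_mem_nhdsWithin ?_)
    filter_upwards [self_mem_nhdsWithin, mem_nhdsWithin_of_mem_nhds (Iio_mem_nhds hxz)]
      with w hw hw'
    exact ⟨hw.1, le_of_lt hw'⟩
  have hbound : ∀ x ∈ Ico 0 s, ‖y' x‖ ≤ A * (‖y 0‖ + ‖y' 0‖) := by
    intro x hx
    obtain ⟨z, hz, hxz⟩ := hbelow x hx.1 hx.2
    have := hbd z hz.1 lam le_rfl y y' (pA z hz.1 hz.2) (pB z hz.1 (AB z hz.1 hz.2)) x
      ⟨hx.1, hxz.le⟩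
    linarith [norm_nonneg (y x)]
  have hIco : IntegrableOn y' (Ico 0 s) := by
    refine IntegrableOn.of_bound (C := A * (‖y 0‖ + ‖y' 0‖)) (by simp)
      (hcont.aestronglyMeasurable measurableSet_Ico) ?_
    exact (ae_restrict_iff' measurableSet_Ico).2 (Filter.Eventually.of_forall hbound)
  by_cases hB : ∃ x ∈ Ioc s T, IntervalIntegrable f volume 0 x
  · obtain ⟨x, hx, hi⟩ := hB
    have hx' : x ∈ Icc 0 T := ⟨hs0.trans hx.1.le, hx.2⟩
    exact absurd (le_csSup hZb (show x ∈ Z from ⟨hx', BA x hx' hi⟩)) (not_le.2 hx.1)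
  · push Not at hB
    have hconst : EqOn y' (fun _ => y' 0) (Ioc s T) := by
      intro x hx
      have := h.2 x ⟨hs0.trans hx.1.le, hx.2⟩
      rwa [intervalIntegral.integral_undef (hB x hx), add_zero] at this
    have hIoc : IntegrableOn y' (Ioc s T) :=
      (integrableOn_congr_fun hconst measurableSet_Ioc).2 (integrableOn_const (by simp))
    have hIcc : IntegrableOn y' (Icc 0 s) := by
      rwa [integrableOn_Icc_iff_integrableOn_Ico]
    rw [intervalIntegrable_iff_integrableOn_Icc_of_le hT]
    refine (hIcc.union hIoc).mono_set fun x hx => ?_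
    rcases le_or_gt x s with h1 | h1
    · exact Or.inl ⟨hx.1, h1⟩
    · exact Or.inr ⟨h1, hx.2⟩

/-- Wronskian identity for solutions `y`, `z` of the same equation at spectral parameters
`lam`, `mu`. -/
lemma wronskian {T : ℝ} (hT : 0 ≤ T) {q : ℝ → ℝ} {lam mu : ℂ} {y y' z z' : ℝ → ℂ}
    (hy : Prim T y y') (hy' : Prim T y' (fun t => ((q t : ℂ) - lam) * y t))
    (hz : Prim T z z') (hz' : Prim T z' (fun t => ((q t : ℂ) - mu) * z t)) :
    ∀ x ∈ Icc 0 T, y x * z' x - y' x * z x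
      = y 0 * z' 0 - y' 0 * z 0 + (lam - mu) * ∫ t in (0:ℝ)..x, y t * z t := by
  intro x hx
  have h := ((hy.mul hT hz').add ((hy'.mul hT hz).const_mul (-1))).2 x hx
  simp only at h
  rw [← intervalIntegral.integral_const_mul]
  have e : (∫ t in (0:ℝ)..x, (y' t * z' t + y t * (((q t : ℂ) - mu) * z t) +
      -1 * (((q t : ℂ) - lam) * y t * z t + y' t * z' t)))
      = ∫ t in (0:ℝ)..x, (lam - mu) * (y t * z t) := by
    apply intervalIntegral.integral_congr
    intro t _
    simp only; ring
  rw [e] at h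
  linear_combination h

/-! ### Analytic dependence on the spectral parameter -/

/-- Variation of constants: a family of solutions with `λ`-independent initial data differs from
its member at `mu` by `λ - mu` times an integral against the fundamental system at `mu`. -/
lemma variation {T : ℝ} (hT : 0 ≤ T) {q : ℝ → ℝ} {lam mu a b : ℂ} {y y' w w' c c' s s' : ℝ → ℂ}
    (hy : Prim T y y') (hy' : Prim T y' (fun t => ((q t : ℂ) - lam) * y t))
    (hw : Prim T w w') (hw' : Prim T w' (fun t => ((q t : ℂ) - mu) * w t))
    (hc : Prim T c c') (hc' : Prim T c' (fun t => ((q t : ℂ) - mu) * c t))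
    (hs : Prim T s s') (hs' : Prim T s' (fun t => ((q t : ℂ) - mu) * s t))
    (hy0 : y 0 = a) (hy'0 : y' 0 = b) (hw0 : w 0 = a) (hw'0 : w' 0 = b)
    (hc0 : c 0 = 1) (hc'0 : c' 0 = 0) (hs0 : s 0 = 0) (hs'0 : s' 0 = 1) :
    ∀ x ∈ Icc 0 T, y x = w x + (lam - mu) *
      (c x * (∫ t in (0:ℝ)..x, y t * s t) - s x * ∫ t in (0:ℝ)..x, y t * c t) := by
  intro x hx
  have h1 := wronskian hT hy hy' hc hc' x hx
  have h2 := wronskian hT hy hy' hs hs' x hx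
  have h3 := wronskian hT hw hw' hc hc' x hx
  have h4 := wronskian hT hw hw' hs hs' x hx
  have h5 := wronskian hT hc hc' hs hs' x hx
  simp only [hy0, hy'0, hw0, hw'0, hc0, hc'0, hs0, hs'0, sub_self, zero_mul, mul_zero, mul_one,
    add_zero, zero_sub, sub_zero] at h1 h2 h3 h4 h5
  linear_combination c x * h2 - s x * h1 - (c x * h4 - s x * h3) - (y x - w x) * h5

/-- A family of solutions with `λ`-independent initial data is entire in `λ`. -/
lemma entire_of_sol {T : ℝ} (hT : 0 ≤ T) {q : ℝ → ℝ} (hq : IntegrableOn q (Icc 0 T)) {a b : ℂ}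
    {y y' c c' s s' : ℝ → ℂ → ℂ}
    (hy : ∀ l, Prim T (y · l) (y' · l))
    (hy' : ∀ l, Prim T (y' · l) (fun t => ((q t : ℂ) - l) * y t l))
    (hc : ∀ l, Prim T (c · l) (c' · l))
    (hc' : ∀ l, Prim T (c' · l) (fun t => ((q t : ℂ) - l) * c t l))
    (hs : ∀ l, Prim T (s · l) (s' · l))
    (hs' : ∀ l, Prim T (s' · l) (fun t => ((q t : ℂ) - l) * s t l))
    (hy0 : ∀ l, y 0 l = a) (hy'0 : ∀ l, y' 0 l = b)
    (hc0 : ∀ l, c 0 l = 1) (hc'0 : ∀ l, c' 0 l = 0)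
    (hs0 : ∀ l, s 0 l = 0) (hs'0 : ∀ l, s' 0 l = 1) {x : ℝ} (hx : x ∈ Icc 0 T) :
    Differentiable ℂ (fun l => y x l) := by
  intro mu
  have hvar : ∀ l, ∀ x ∈ Icc 0 T, y x l = y x mu + (l - mu) *
      (c x mu * (∫ t in (0:ℝ)..x, y t l * s t mu) - s x mu * ∫ t in (0:ℝ)..x, y t l * c t mu) :=
    fun l => variation hT (hy l) (hy' l) (hy mu) (hy' mu) (hc mu) (hc' mu) (hs mu) (hs' mu)
      (hy0 l) (hy'0 l) (hy0 mu) (hy'0 mu) (hc0 mu) (hc'0 mu) (hs0 mu) (hs'0 mu)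
  obtain ⟨A, hA, hbd⟩ := sl_bound hT hq (L := ‖mu‖ + 1) (by positivity)
  have hTT : T ∈ Icc 0 T := ⟨hT, le_rfl⟩
  have hnear : ∀ᶠ l in nhds mu, ‖l‖ ≤ ‖mu‖ + 1 := by
    filter_upwards [Metric.closedBall_mem_nhds mu one_pos] with l hl
    rw [mem_closedBall_iff_norm] at hl
    calc ‖l‖ = ‖mu + (l - mu)‖ := by ring_nf
      _ ≤ _ := (norm_add_le _ _).trans (by gcongr)
  set B := A * (‖a‖ + ‖b‖) with hB
  have hyB : ∀ l, ‖l‖ ≤ ‖mu‖ + 1 → ∀ t ∈ Icc 0 T, ‖y t l‖ ≤ B := by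
    intro l hl t ht
    have := hbd T hTT l hl _ _ (hy l) (hy' l) t ht
    simp only [hy0, hy'0] at this
    have hnn := norm_nonneg (y' t l)
    linarith
  -- the integrals are locally bounded, hence `y t` is continuous at `mu`
  have hIbd : ∀ z : ℝ → ℂ, ContinuousOn z (Icc 0 T) → ∃ D, ∀ l, ‖l‖ ≤ ‖mu‖ + 1 → ∀ x ∈ Icc 0 T,
      ‖∫ t in (0:ℝ)..x, y t l * z t‖ ≤ D := by
    intro z hz
    obtain ⟨D, hD⟩ := isCompact_Icc.exists_bound_of_continuousOn hz
    have hD0 : 0 ≤ D := (norm_nonneg _).trans (hD 0 ⟨le_rfl, hT⟩)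
    refine ⟨B * D * T, fun l hl x hx => ?_⟩
    have h1 := intervalIntegral.norm_integral_le_of_norm_le_const (a := 0) (b := x) (C := B * D)
      (f := fun t => y t l * z t) (fun t ht => by
        rw [uIoc_of_le hx.1] at ht
        have ht' : t ∈ Icc 0 T := ⟨ht.1.le, ht.2.trans hx.2⟩
        rw [norm_mul]
        exact mul_le_mul (hyB l hl t ht') (hD t ht') (norm_nonneg _) (by positivity))
    refine h1.trans ?_
    rw [sub_zero, abs_of_nonneg hx.1]
    have : 0 ≤ B * D := by positivity
    exact mul_le_mul_of_nonneg_left hx.2 this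
  have hcc := (hc mu).continuousOn hT
  have hsc := (hs mu).continuousOn hT
  obtain ⟨D1, hD1⟩ := hIbd _ hsc
  obtain ⟨D2, hD2⟩ := hIbd _ hcc
  have hcont : ∀ t ∈ Icc 0 T, ContinuousAt (fun l => y t l) mu := by
    intro t ht
    have h1 : Filter.Tendsto (fun l => y t mu + (l - mu) *
      (c t mu * (∫ r in (0:ℝ)..t, y r l * s r mu) - s t mu * ∫ r in (0:ℝ)..t, y r l * c r mu))
        (nhds mu) (nhds (y t mu + 0)) := by
      refine tendsto_const_nhds.add (squeeze_zero_norm' (a := fun l => ‖l - mu‖ *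
        (‖c t mu‖ * D1 + ‖s t mu‖ * D2)) ?_ ?_)
      · filter_upwards [hnear] with l hl
        rw [norm_mul]
        gcongr
        refine (norm_sub_le _ _).trans ?_
        rw [norm_mul, norm_mul]
        gcongr
        · exact hD1 l hl t ht
        · exact hD2 l hl t ht
      · have : Continuous (fun l : ℂ => ‖l - mu‖ * (‖c t mu‖ * D1 + ‖s t mu‖ * D2)) := by fun_prop
        simpa using this.tendsto mu
    rw [add_zero] at h1
    exact h1.congr fun l => (hvar l t ht).symm
  have hint : ∀ z : ℝ → ℂ, ContinuousOn z (Icc 0 T) →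
      ContinuousAt (fun l => ∫ t in (0:ℝ)..x, y t l * z t) mu := by
    intro z hz
    have hsub : uIoc 0 x ⊆ Icc 0 T := by
      rw [uIoc_of_le hx.1]
      exact fun t ht => ⟨ht.1.le, ht.2.trans hx.2⟩
    have hsub' : uIcc 0 x ⊆ Icc 0 T := by
      rw [uIcc_of_le hx.1]; exact Icc_subset_Icc_right hx.2
    refine intervalIntegral.continuousAt_of_dominated_interval (bound := fun t => B * ‖z t‖)
      ?_ ?_ ?_ ?_
    · refine Filter.Eventually.of_forall fun l => ?_
      exact ((((hy l).continuousOn hT).mul hz).mono hsub).aestronglyMeasurable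
        measurableSet_uIoc
    · filter_upwards [hnear] with l hl
      refine Filter.Eventually.of_forall fun t ht => ?_
      rw [norm_mul]
      gcongr
      exact hyB l hl t (hsub ht)
    · exact ((hz.mono hsub').norm.const_smul B).intervalIntegrable
    · exact Filter.Eventually.of_forall fun t ht =>
        (hcont t (hsub ht)).mul continuousAt_const
  have hg : ContinuousAt (fun l => c x mu * (∫ t in (0:ℝ)..x, y t l * s t mu)
      - s x mu * ∫ t in (0:ℝ)..x, y t l * c t mu) mu :=
    (continuousAt_const.mul (hint _ hsc)).sub (continuousAt_const.mul (hint _ hcc))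
  refine (hasDerivAt_iff_tendsto_slope.2
    ((hg.tendsto.mono_left nhdsWithin_le_nhds).congr' ?_)).differentiableAt
  filter_upwards [self_mem_nhdsWithin] with l hl
  have hl' : l - mu ≠ 0 := sub_ne_zero.2 hl
  rw [slope_def_field, hvar l x hx]
  field_simp
  ring

/-! ### Exponential growth of solutions -/

lemma prim_exp (T : ℝ) (c : ℂ) :
    Prim T (fun t => Complex.exp (c * t)) (fun t => c * Complex.exp (c * t)) := by
  have hc : Continuous (fun t : ℝ => c * Complex.exp (c * t)) := by fun_prop
  refine ⟨hc.intervalIntegrable _ _, fun x _ => ?_⟩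
  rw [intervalIntegral.integral_eq_sub_of_hasDerivAt (f := fun t : ℝ => Complex.exp (c * t))
    (fun t _ => ?_) (hc.intervalIntegrable _ _)]
  · simp
  · have h1 : HasDerivAt (fun t : ℝ => c * (t : ℂ)) c t := by
      simpa using (Complex.ofRealCLM.hasDerivAt (x := t)).const_mul c
    simpa [mul_comm] using h1.cexp

/-- The first-order combination `y' + c y`, `c² = -λ`, solves `u' = c u + q y`; this is the
resulting estimate. -/
lemma char_bound {T : ℝ} (hT : 0 ≤ T) {q : ℝ → ℝ} (hq : IntegrableOn q (Icc 0 T)) {lam c : ℂ}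
    (hlam : lam = -c ^ 2) {m : ℝ} (hm : |c.re| ≤ m) {y y' : ℝ → ℂ}
    (hy : Prim T y y') (hy' : Prim T y' (fun t => ((q t : ℂ) - lam) * y t)) :
    ∀ x ∈ Icc 0 T, ‖y' x + c * y x‖ * Real.exp (-m * x)
      ≤ ‖y' 0 + c * y 0‖ + ∫ t in (0:ℝ)..x, |q t| * (‖y t‖ * Real.exp (-m * t)) := by
  intro x hx
  have h := ((hy'.add (hy.const_mul c)).mul hT (prim_exp T (-c))).2 x hx
  simp only [ofReal_zero, mul_zero, Complex.exp_zero, mul_one] at h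
  have e : (∫ t in (0:ℝ)..x, ((((q t : ℂ) - lam) * y t + c * y' t) * Complex.exp (-c * t) +
      (y' t + c * y t) * (-c * Complex.exp (-c * t))))
      = ∫ t in (0:ℝ)..x, (q t : ℂ) * y t * Complex.exp (-c * t) := by
    apply intervalIntegral.integral_congr
    intro t _
    simp only [hlam]; ring
  rw [e] at h
  have hre : ∀ t ≤ x, c.re * (x - t) ≤ m * (x - t) := fun t ht =>
    mul_le_mul_of_nonneg_right ((le_abs_self _).trans hm) (by linarith)
  have h2 : (y' x + c * y x) * Complex.exp (-m * x) =
      (y' 0 + c * y 0) * Complex.exp (c * x - m * x)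
      + ∫ t in (0:ℝ)..x, Complex.exp (c * x - m * x) * ((q t : ℂ) * y t * Complex.exp (-c * t)) := by
    rw [intervalIntegral.integral_const_mul]
    have e2 : Complex.exp (-m * x) = Complex.exp (-c * x) * Complex.exp (c * x - m * x) := by
      rw [← Complex.exp_add]; ring_nf
    rw [e2]
    linear_combination Complex.exp (c * x - m * x) * h
  have h3 : ‖y' x + c * y x‖ * Real.exp (-m * x)
      = ‖(y' x + c * y x) * Complex.exp (-m * x)‖ := by
    rw [norm_mul, Complex.norm_exp]; simp
  rw [h3, h2]
  refine (norm_add_le _ _).trans (add_le_add ?_ ?_)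
  · rw [norm_mul, Complex.norm_exp]
    refine mul_le_of_le_one_right (norm_nonneg _) (Real.exp_le_one_iff.2 ?_)
    have := hre 0 hx.1
    simp; simpa using this
  · refine (intervalIntegral.norm_integral_le_integral_norm hx.1).trans ?_
    have hsub' : uIcc 0 x ⊆ Icc 0 T := by
      rw [uIcc_of_le hx.1]; exact Icc_subset_Icc_right hx.2
    have hyc := (hy.continuousOn hT).mono hsub'
    have hqx := coeff_intervalIntegrable hq hx
    have i1 : IntervalIntegrable (fun t => (q t : ℂ)) volume 0 x := ⟨hqx.1.ofReal, hqx.2.ofReal⟩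
    refine intervalIntegral.integral_mono_on hx.1 ?_ ?_ ?_
    · exact (((i1.mul_continuousOn hyc).mul_continuousOn
        (by fun_prop)).const_mul _).norm
    · exact hqx.abs.mul_continuousOn (hyc.norm.mul (by fun_prop))
    · intro t ht
      rw [norm_mul, norm_mul, norm_mul, Complex.norm_exp, Complex.norm_exp, Complex.norm_real,
        Real.norm_eq_abs]
      have e3 : Real.exp (c * x - m * x).re * (|q t| * ‖y t‖ * Real.exp (-c * t).re)
          = |q t| * (‖y t‖ * Real.exp (c.re * (x - t) - m * x)) := by
        have : c.re * (x - t) - m * x = (c * x - m * x).re + (-c * t).re := by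
          simp; ring
        rw [this, Real.exp_add]; ring
      rw [e3]
      gcongr
      have := hre t ht.2
      linarith

/-- Solutions at `λ = ρ²` grow at most like `e^{|Im ρ| x}`, uniformly for `|ρ| ≥ 1`. -/
lemma sol_growth {T : ℝ} (hT : 0 ≤ T) {q : ℝ → ℝ} (hq : IntegrableOn q (Icc 0 T)) :
    ∃ A : ℝ, 0 < A ∧ ∀ ρ : ℂ, 1 ≤ ‖ρ‖ → ∀ y y' : ℝ → ℂ, Prim T y y' →
      Prim T y' (fun t => ((q t : ℂ) - ρ ^ 2) * y t) →
      ∀ x ∈ Icc 0 T, ‖y x‖ ≤ A * (‖y 0‖ + ‖y' 0‖) * Real.exp (|ρ.im| * x) := by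
  have hqT := coeff_intervalIntegrable hq ⟨hT, le_rfl⟩
  obtain ⟨A, hA, H⟩ := gronwall_L1 hT hqT.abs (fun x => abs_nonneg _)
  refine ⟨A, hA, fun ρ hρ y y' hy hy' => ?_⟩
  set m := |ρ.im| with hm
  have hc1 := char_bound hT hq (c := I * ρ) (m := m) (by rw [mul_pow, I_sq]; ring)
    (by simp [hm]) hy hy'
  have hc2 := char_bound hT hq (c := -(I * ρ)) (m := m) (by rw [neg_sq, mul_pow, I_sq]; ring)
    (by simp [hm]) hy hy'
  have hyc := hy.continuousOn hT
  have hmain := H T ⟨hT, le_rfl⟩ (‖y 0‖ + ‖y' 0‖) (by positivity)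
    (fun x => ‖y x‖ * Real.exp (-m * x)) (hyc.norm.mul (by fun_prop))
    (fun x _ => by positivity) (fun x hx => by
      have h1 := hc1 x hx
      have h2 := hc2 x hx
      set J := ∫ t in (0:ℝ)..x, |q t| * (‖y t‖ * Real.exp (-m * t)) with hJ
      have hJ0 : 0 ≤ J := intervalIntegral.integral_nonneg hx.1 (fun t _ => by positivity)
      set r := ‖ρ‖ with hr
      have e1 : 2 * r * ‖y x‖ ≤ ‖y' x + I * ρ * y x‖ + ‖y' x + -(I * ρ) * y x‖ := by
        have : 2 * (I * ρ) * y x = (y' x + I * ρ * y x) - (y' x + -(I * ρ) * y x) := by ring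
        have e : 2 * r * ‖y x‖ = ‖2 * (I * ρ) * y x‖ := by simp [hr]
        rw [e, this]
        exact norm_sub_le _ _
      have e2 : ‖y' 0 + I * ρ * y 0‖ ≤ ‖y' 0‖ + r * ‖y 0‖ :=
        (norm_add_le _ _).trans (by simp [hr])
      have e3 : ‖y' 0 + -(I * ρ) * y 0‖ ≤ ‖y' 0‖ + r * ‖y 0‖ :=
        (norm_add_le _ _).trans (by simp [hr])
      have e4 := mul_le_mul_of_nonneg_right e1 (Real.exp_pos (-m * x)).le
      have e5 : r * (‖y x‖ * Real.exp (-m * x)) ≤ r * (‖y 0‖ + ‖y' 0‖ + J) := by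
        nlinarith [norm_nonneg (y' 0)]
      exact le_of_mul_le_mul_left e5 (by linarith))
  intro x hx
  have := hmain x hx
  simp only [neg_mul, Real.exp_neg] at this
  rwa [← div_eq_mul_inv, div_le_iff₀ (Real.exp_pos _)] at this

/-! ### Vanishing by Phragmén–Lindelöf -/

/-- An even entire function of exponential type that decays in the sector `δ ≤ arg ρ ≤ π - δ`
vanishes: it is bounded in the complementary sectors, of opening `2δ < π`, by the
Phragmén–Lindelöf principle (transported to a strip by `exp`), so Liouville's theorem applies. -/
lemma eq_zero_of_sector_decay {G : ℂ → ℂ} (hG : Differentiable ℂ G) (heven : ∀ ρ, G (-ρ) = G ρ)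
    {A B D R δ : ℝ} (hA : 0 ≤ A) (hB : 0 ≤ B) (hD : 0 ≤ D) (hR : 1 ≤ R) (hδ0 : 0 < δ)
    (hδπ : δ < Real.pi / 2) (hgrow : ∀ ρ, 1 ≤ ‖ρ‖ → ‖G ρ‖ ≤ A * Real.exp (B * ‖ρ‖))
    (hsec : ∀ ρ, arg ρ ∈ Icc δ (Real.pi - δ) → R ≤ ‖ρ‖ → ‖G ρ‖ ≤ D * ‖ρ‖⁻¹) (ρ : ℂ) :
    G ρ = 0 := by
  obtain ⟨D1, hD1⟩ := (isCompact_closedBall (0:ℂ) R).exists_bound_of_continuousOn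
    hG.continuous.continuousOn
  have hball : ∀ ρ : ℂ, ‖ρ‖ ≤ R → ‖G ρ‖ ≤ D1 := fun ρ h => hD1 ρ (by simpa using h)
  have hD10 : 0 ≤ D1 := (norm_nonneg _).trans (hball 0 (by simp; linarith))
  set E := max D1 D with hE
  have hpi := Real.pi_pos
  have hupper : ∀ z : ℂ, z.im ∈ Icc δ (Real.pi - δ) → ‖G (Complex.exp z)‖ ≤ E := by
    intro z hz
    rcases le_total ‖Complex.exp z‖ R with h | h
    · exact (hball _ h).trans (le_max_left _ _)
    · have harg : arg (Complex.exp z) = z.im := by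
        rw [← Complex.log_im, Complex.log_exp (by linarith [hz.1]) (by linarith [hz.2])]
      refine (hsec _ (by rwa [harg]) h).trans (le_trans ?_ (le_max_right _ _))
      exact mul_le_of_le_one_right hD (inv_le_one_of_one_le₀ (hR.trans h))
  have hadd : ∀ z : ℂ, G (Complex.exp (z + Real.pi * I)) = G (Complex.exp z) := by
    intro z
    rw [Complex.exp_add, Complex.exp_pi_mul_I, mul_neg_one, heven]
  have hsubt : ∀ z : ℂ, G (Complex.exp (z - Real.pi * I)) = G (Complex.exp z) := by
    intro z
    rw [← hadd, sub_add_cancel]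
  have hstrip : ∀ z : ℂ, -δ ≤ z.im → z.im ≤ δ → ‖G (Complex.exp z)‖ ≤ E := by
    intro z h1 h2
    refine PhragmenLindelof.horizontal_strip (f := fun z => G (Complex.exp z)) (a := -δ) (b := δ)
      (hG.comp Complex.differentiable_exp).diffContOnCl ⟨1, ?_, B, ?_⟩ ?_ ?_ h1 h2
    · rw [lt_div_iff₀ (by linarith)]; linarith
    · refine Asymptotics.IsBigO.of_bound (max A D1) (Filter.Eventually.of_forall fun w => ?_)
      rw [Real.norm_of_nonneg (Real.exp_pos _).le, one_mul]
      rcases le_total 1 ‖Complex.exp w‖ with h | h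
      · refine (hgrow _ h).trans ?_
        rw [Complex.norm_exp]
        gcongr
        · exact le_max_left _ _
        · exact le_abs_self _
      · refine (hball _ (h.trans hR)).trans ((le_max_right A D1).trans ?_)
        refine le_mul_of_one_le_right (hD10.trans (le_max_right _ _)) (Real.one_le_exp ?_)
        positivity
    · intro w hw
      rw [← hadd]
      exact hupper _ (by simp [hw]; linarith)
    · intro w hw
      exact hupper _ (by rw [hw]; exact ⟨le_rfl, by linarith⟩)
  have hbdd : ∀ ρ : ℂ, ‖G ρ‖ ≤ E := by
    intro ρ
    rcases eq_or_ne ρ 0 with rfl | h0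
    · exact (hball _ (by simp; linarith)).trans (le_max_left _ _)
    have hz1 : -Real.pi < (Complex.log ρ).im := Complex.neg_pi_lt_log_im ρ
    have hz2 : (Complex.log ρ).im ≤ Real.pi := Complex.log_im_le_pi ρ
    rw [← Complex.exp_log h0]
    set z := Complex.log ρ
    rcases le_total z.im (-δ) with h1 | h1
    · rw [← hadd]
      rcases le_total (z.im + Real.pi) δ with h2 | h2
      · exact hstrip _ (by simp; linarith) (by simpa using h2)
      · exact hupper _ ⟨by simpa using h2, by simp; linarith⟩
    · rcases le_total z.im δ with h2 | h2
      · exact hstrip _ h1 h2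
      · rcases le_total z.im (Real.pi - δ) with h3 | h3
        · exact hupper _ ⟨h2, h3⟩
        · rw [← hsubt]
          exact hstrip _ (by simp; linarith) (by simp; linarith)
  have hconst : ∀ r : ℝ, R ≤ r → ‖G ρ‖ ≤ D * r⁻¹ := by
    intro r hr
    have hr0 : 0 < r := by linarith
    have hb : Bornology.IsBounded (range G) :=
      isBounded_iff_forall_norm_le.2 ⟨E, by rintro _ ⟨w, rfl⟩; exact hbdd w⟩
    rw [hG.apply_eq_apply_of_bounded hb ρ (r * I)]
    have hn : ‖(r * I : ℂ)‖ = r := by simp [abs_of_pos hr0]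
    have := hsec (r * I) (by
      rw [Complex.arg_real_mul _ hr0, Complex.arg_I]; constructor <;> linarith) (by rwa [hn])
    rwa [hn] at this
  have hlim : Filter.Tendsto (fun r : ℝ => D * r⁻¹) Filter.atTop (nhds 0) := by
    simpa using tendsto_inv_atTop_zero.const_mul D
  have : ‖G ρ‖ ≤ 0 := ge_of_tendsto hlim (Filter.eventually_atTop.2 ⟨R, hconst⟩)
  exact norm_le_zero_iff.1 this

/-! ### Uniqueness of derivatives and elementary estimates -/

/-- The derivative of an absolutely continuous function is determined a.e. by the function. -/
lemma Prim.ae_eq {T : ℝ} (hT : 0 ≤ T) {f g F G : ℝ → ℂ} (hf : Prim T f g) (hF : Prim T F G)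
    (h : EqOn f F (Icc 0 T)) : g =ᵐ[volume.restrict (Icc 0 T)] G := by
  have hd := hf.1.sub hF.1
  rw [← Measure.restrict_congr_set (Ioo_ae_eq_Icc (μ := volume) (a := (0:ℝ)) (b := T))]
  refine (ae_restrict_iff' measurableSet_Ioo).2 ?_
  filter_upwards [hd.ae_hasDerivAt_integral] with x hx hxI
  have h1 := hx (by rw [uIcc_of_le hT]; exact Ioo_subset_Icc_self hxI) 0 (by simp)
  have h2 : (fun x => ∫ t in (0:ℝ)..x, (g - G) t) =ᶠ[nhds x] fun _ => 0 := by
    filter_upwards [Ioo_mem_nhds hxI.1 hxI.2] with z hz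
    have hzI : z ∈ Icc 0 T := Ioo_subset_Icc_self hz
    have hs : uIcc 0 z ⊆ uIcc 0 T := uIcc_subset_uIcc_left (by rwa [uIcc_of_le hT])
    have e := intervalIntegral.integral_sub (hf.1.mono_set hs) (hF.1.mono_set hs)
    have e1 := hf.2 z hzI
    have e2 := hF.2 z hzI
    have e3 := h hzI
    have e4 := h (show (0:ℝ) ∈ Icc 0 T from ⟨le_rfl, hT⟩)
    simp only [Pi.sub_apply]
    rw [e]
    linear_combination e3 - e1 + e2 - e4
  have h3 := h1.unique ((hasDerivAt_const x (0:ℂ)).congr_of_eventuallyEq h2)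
  exact sub_eq_zero.1 h3

lemma Prim.eqOn {T : ℝ} (hT : 0 < T) {f g F G : ℝ → ℂ} (hf : Prim T f g) (hF : Prim T F G)
    (hg : ContinuousOn g (Icc 0 T)) (hG : ContinuousOn G (Icc 0 T))
    (h : EqOn f F (Icc 0 T)) : EqOn g G (Icc 0 T) :=
  Measure.eqOn_Icc_of_ae_eq volume hT.ne (hf.ae_eq hT.le hF h) hg hG

/-- Linear combinations of solutions are solutions. -/
lemma Prim.comb {T : ℝ} {q : ℝ → ℝ} {lam : ℂ} {y y' z z' : ℝ → ℂ} (c : ℂ)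
    (hy : Prim T y y' ∧ Prim T y' (fun t => ((q t : ℂ) - lam) * y t))
    (hz : Prim T z z' ∧ Prim T z' (fun t => ((q t : ℂ) - lam) * z t)) :
    Prim T (fun x => y x + c * z x) (fun x => y' x + c * z' x) ∧
    Prim T (fun x => y' x + c * z' x) (fun t => ((q t : ℂ) - lam) * (y t + c * z t)) :=
  ⟨hy.1.add (hz.1.const_mul c),
    (hy.2.add (hz.2.const_mul c)).congr_right fun t => by ring⟩

lemma norm_free (ρ : ℂ) (x : ℝ) :
    ‖(I * ρ)⁻¹ * Complex.exp (I * ρ * x)‖ = ‖ρ‖⁻¹ * Real.exp (-ρ.im * x) := by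
  rw [norm_mul, Complex.norm_exp]
  simp

lemma weyl_norm_le {ρ w : ℂ} {K x : ℝ} (hρ : 1 ≤ ‖ρ‖) (hK : 0 < K)
    (h : ‖w - (I * ρ)⁻¹ * Complex.exp (I * ρ * x)‖
      ≤ K * (‖ρ‖ ^ 2)⁻¹ * Real.exp (-ρ.im * x)) :
    ‖w‖ ≤ (1 + K) * ‖ρ‖⁻¹ * Real.exp (-ρ.im * x) := by
  have h1 : (‖ρ‖ ^ 2)⁻¹ ≤ ‖ρ‖⁻¹ := by
    apply inv_anti₀ (by linarith)
    nlinarith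
  have h2 : K * (‖ρ‖ ^ 2)⁻¹ * Real.exp (-ρ.im * x) ≤ K * ‖ρ‖⁻¹ * Real.exp (-ρ.im * x) := by
    gcongr
  have h3 := norm_sub_norm_le w ((I * ρ)⁻¹ * Complex.exp (I * ρ * x))
  rw [norm_free] at h3
  linarith

/-- If both `w`, `w'` are closer to the same `e` than `‖e‖`, then `w² = w'²` forces `w = w'`. -/
lemma eq_of_sq_eq_of_near {w w' e : ℂ} (h1 : ‖w - e‖ < ‖e‖) (h2 : ‖w' - e‖ < ‖e‖)
    (h : w ^ 2 = w' ^ 2) : w = w' := by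
  rcases sq_eq_sq_iff_eq_or_eq_neg.1 h with h | h
  · exact h
  · exfalso
    have h3 : 2 * e = -((w - e) + (w' - e)) := by rw [h]; ring
    have h4 : ‖2 * e‖ ≤ ‖w - e‖ + ‖w' - e‖ := by
      rw [h3, norm_neg]; exact norm_add_le _ _
    rw [norm_mul, Complex.norm_ofNat] at h4
    linarith

/-! ### Uniqueness of the potential and the boundary coefficient -/

/-- if Φ = S + M·φ and Φ̃ = S̃ + M·φ̃ (same function M) both satisfy the
Weyl-solution asymptotics |Φ^{(ν)}(x,ρ²) − (iρ)^{ν−1}e^{iρx}| ≤ K|ρ|^{ν−2}e^{−τx}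
in the sector arg ρ ∈ [δ, π−δ], |ρ| ≥ R, uniformly in x ∈ [0,T], then q = q̃ a.e.
on [0,T] and h = h̃. -/
theorem weyl_asymptotics_uniqueness
    (T : ℝ) (hT : 0 < T) (q qt : ℝ → ℝ)
    (hq : IntegrableOn q (Icc 0 T)) (hqt : IntegrableOn qt (Icc 0 T))
    (h ht : ℝ)
    (S S' C C' St St' Ct Ct' : ℝ → ℂ → ℂ)
    (hS : ∀ lam : ℂ, SLSol q T lam (fun x => S x lam) (fun x => S' x lam))
    (hC : ∀ lam : ℂ, SLSol q T lam (fun x => C x lam) (fun x => C' x lam))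
    (hSt : ∀ lam : ℂ, SLSol qt T lam (fun x => St x lam) (fun x => St' x lam))
    (hCt : ∀ lam : ℂ, SLSol qt T lam (fun x => Ct x lam) (fun x => Ct' x lam))
    (hS0 : ∀ lam : ℂ, S 0 lam = 0) (hS'0 : ∀ lam : ℂ, S' 0 lam = 1)
    (hC0 : ∀ lam : ℂ, C 0 lam = 1) (hC'0 : ∀ lam : ℂ, C' 0 lam = 0)
    (hSt0 : ∀ lam : ℂ, St 0 lam = 0) (hSt'0 : ∀ lam : ℂ, St' 0 lam = 1)
    (hCt0 : ∀ lam : ℂ, Ct 0 lam = 1) (hCt'0 : ∀ lam : ℂ, Ct' 0 lam = 0)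
    (M : ℂ → ℂ)
    (δ : ℝ) (hδ0 : 0 < δ) (hδπ : δ < Real.pi / 2)
    (K R : ℝ) (hK : 0 < K) (hR : 1 ≤ R)
    -- asymptotics of Φ = S + M·φ, where φ = C + h·S
    (hΦ : ∀ ρ : ℂ, arg ρ ∈ Icc δ (Real.pi - δ) → R ≤ ‖ρ‖ → ∀ x ∈ Icc (0:ℝ) T,
      ‖(S x (ρ ^ 2) + M (ρ ^ 2) * (C x (ρ ^ 2) + (h : ℂ) * S x (ρ ^ 2)))
          - (I * ρ)⁻¹ * Complex.exp (I * ρ * x)‖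
        ≤ K * (‖ρ‖ ^ 2)⁻¹ * Real.exp (-ρ.im * x) ∧
      ‖(S' x (ρ ^ 2) + M (ρ ^ 2) * (C' x (ρ ^ 2) + (h : ℂ) * S' x (ρ ^ 2)))
          - Complex.exp (I * ρ * x)‖
        ≤ K * ‖ρ‖⁻¹ * Real.exp (-ρ.im * x))
    -- the same asymptotics for Φ̃ = S̃ + M·φ̃, where φ̃ = C̃ + h̃·S̃
    (hΦt : ∀ ρ : ℂ, arg ρ ∈ Icc δ (Real.pi - δ) → R ≤ ‖ρ‖ → ∀ x ∈ Icc (0:ℝ) T,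
      ‖(St x (ρ ^ 2) + M (ρ ^ 2) * (Ct x (ρ ^ 2) + (ht : ℂ) * St x (ρ ^ 2)))
          - (I * ρ)⁻¹ * Complex.exp (I * ρ * x)‖
        ≤ K * (‖ρ‖ ^ 2)⁻¹ * Real.exp (-ρ.im * x) ∧
      ‖(St' x (ρ ^ 2) + M (ρ ^ 2) * (Ct' x (ρ ^ 2) + (ht : ℂ) * St' x (ρ ^ 2)))
          - Complex.exp (I * ρ * x)‖
        ≤ K * ‖ρ‖⁻¹ * Real.exp (-ρ.im * x)) :
    (∀ᵐ x ∂(volume.restrict (Icc (0:ℝ) T)), q x = qt x) ∧ h = ht := by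
  have hT0 := hT.le
  have pS := fun l => (hS l).prim hT0 hq
  have pC := fun l => (hC l).prim hT0 hq
  have pSt := fun l => (hSt l).prim hT0 hqt
  have pCt := fun l => (hCt l).prim hT0 hqt
  have pφ := fun l => Prim.comb (h : ℂ) (pC l) (pS l)
  have pφt := fun l => Prim.comb (ht : ℂ) (pCt l) (pSt l)
  -- the function `Φ φ̃ - φ Φ̃`, in which `M` cancels, vanishes identically
  have hzero : ∀ x ∈ Icc 0 T, ∀ ρ : ℂ,
      S x (ρ ^ 2) * (Ct x (ρ ^ 2) + ht * St x (ρ ^ 2))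
        - (C x (ρ ^ 2) + h * S x (ρ ^ 2)) * St x (ρ ^ 2) = 0 := by
    intro x hx
    have dsq : Differentiable ℂ (fun ρ : ℂ => ρ ^ 2) := by fun_prop
    have dS := (entire_of_sol hT0 hq (fun l => (pS l).1) (fun l => (pS l).2) (fun l => (pC l).1)
      (fun l => (pC l).2) (fun l => (pS l).1) (fun l => (pS l).2) hS0 hS'0 hC0 hC'0 hS0 hS'0
      hx).comp dsq
    have dC := (entire_of_sol hT0 hq (fun l => (pC l).1) (fun l => (pC l).2) (fun l => (pC l).1)
      (fun l => (pC l).2) (fun l => (pS l).1) (fun l => (pS l).2) hC0 hC'0 hC0 hC'0 hS0 hS'0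
      hx).comp dsq
    have dSt := (entire_of_sol hT0 hqt (fun l => (pSt l).1) (fun l => (pSt l).2)
      (fun l => (pCt l).1) (fun l => (pCt l).2) (fun l => (pSt l).1) (fun l => (pSt l).2)
      hSt0 hSt'0 hCt0 hCt'0 hSt0 hSt'0 hx).comp dsq
    have dCt := (entire_of_sol hT0 hqt (fun l => (pCt l).1) (fun l => (pCt l).2)
      (fun l => (pCt l).1) (fun l => (pCt l).2) (fun l => (pSt l).1) (fun l => (pSt l).2)
      hCt0 hCt'0 hCt0 hCt'0 hSt0 hSt'0 hx).comp dsq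
    obtain ⟨A, hA, gA⟩ := sol_growth hT0 hq
    obtain ⟨At, hAt, gAt⟩ := sol_growth hT0 hqt
    have bS : ∀ ρ : ℂ, 1 ≤ ‖ρ‖ → ‖S x (ρ ^ 2)‖ ≤ A * Real.exp (|ρ.im| * x) := by
      intro ρ hρ
      simpa [hS0, hS'0] using gA ρ hρ _ _ (pS _).1 (pS _).2 x hx
    have bSt : ∀ ρ : ℂ, 1 ≤ ‖ρ‖ → ‖St x (ρ ^ 2)‖ ≤ At * Real.exp (|ρ.im| * x) := by
      intro ρ hρ
      simpa [hSt0, hSt'0] using gAt ρ hρ _ _ (pSt _).1 (pSt _).2 x hx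
    have bφ : ∀ ρ : ℂ, 1 ≤ ‖ρ‖ → ‖C x (ρ ^ 2) + h * S x (ρ ^ 2)‖
        ≤ A * (1 + |h|) * Real.exp (|ρ.im| * x) := by
      intro ρ hρ
      simpa [hS0, hS'0, hC0, hC'0] using gA ρ hρ _ _ (pφ _).1 (pφ _).2 x hx
    have bφt : ∀ ρ : ℂ, 1 ≤ ‖ρ‖ → ‖Ct x (ρ ^ 2) + ht * St x (ρ ^ 2)‖
        ≤ At * (1 + |ht|) * Real.exp (|ρ.im| * x) := by
      intro ρ hρ
      simpa [hSt0, hSt'0, hCt0, hCt'0] using gAt ρ hρ _ _ (pφt _).1 (pφt _).2 x hx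
    refine eq_zero_of_sector_decay
      (A := A * (At * (1 + |ht|)) + A * (1 + |h|) * At) (B := 2 * T)
      (D := (1 + K) * (At * (1 + |ht|)) + A * (1 + |h|) * (1 + K)) (R := R) (δ := δ)
      ((dS.mul (dCt.add (dSt.const_mul (ht : ℂ)))).sub
        ((dC.add (dS.const_mul (h : ℂ))).mul dSt))
      (fun ρ => by simp only [neg_sq])
      (by positivity) (by positivity) (by positivity) hR hδ0 hδπ ?_ ?_
    · intro ρ hρ
      have e1 : Real.exp (|ρ.im| * x) * Real.exp (|ρ.im| * x) ≤ Real.exp (2 * T * ‖ρ‖) := by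
        rw [← Real.exp_add]
        apply Real.exp_le_exp.2
        have := mul_le_mul (Complex.abs_im_le_norm ρ) hx.2 hx.1 (norm_nonneg ρ)
        linarith
      calc _ ≤ ‖S x (ρ ^ 2)‖ * ‖Ct x (ρ ^ 2) + ht * St x (ρ ^ 2)‖
            + ‖C x (ρ ^ 2) + h * S x (ρ ^ 2)‖ * ‖St x (ρ ^ 2)‖ := by
            rw [← norm_mul, ← norm_mul]; exact norm_sub_le _ _
        _ ≤ (A * Real.exp (|ρ.im| * x)) * (At * (1 + |ht|) * Real.exp (|ρ.im| * x))
            + (A * (1 + |h|) * Real.exp (|ρ.im| * x)) * (At * Real.exp (|ρ.im| * x)) := by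
            gcongr
            exacts [bS ρ hρ, bφt ρ hρ, bφ ρ hρ, bSt ρ hρ]
        _ = (A * (At * (1 + |ht|)) + A * (1 + |h|) * At)
            * (Real.exp (|ρ.im| * x) * Real.exp (|ρ.im| * x)) := by ring
        _ ≤ _ := by gcongr
    · intro ρ harg hρ
      have hρ1 := hR.trans hρ
      have him : |ρ.im| = ρ.im :=
        abs_of_nonneg (Complex.arg_nonneg_iff.1 (hδ0.le.trans harg.1))
      have b1 := weyl_norm_le hρ1 hK (hΦ ρ harg hρ x hx).1
      have b2 := weyl_norm_le hρ1 hK (hΦt ρ harg hρ x hx).1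
      have b3 := bφ ρ hρ1
      have b4 := bφt ρ hρ1
      rw [him] at b3 b4
      have e1 : Real.exp (-ρ.im * x) * Real.exp (ρ.im * x) = 1 := by
        rw [← Real.exp_add]; simp
      set φ := C x (ρ ^ 2) + h * S x (ρ ^ 2) with hφ
      set φt := Ct x (ρ ^ 2) + ht * St x (ρ ^ 2) with hφt
      set w := S x (ρ ^ 2) + M (ρ ^ 2) * φ with hw
      set wt := St x (ρ ^ 2) + M (ρ ^ 2) * φt with hwt
      calc ‖S x (ρ ^ 2) * φt - φ * St x (ρ ^ 2)‖ = ‖w * φt - φ * wt‖ := by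
            rw [hw, hwt]; ring_nf
        _ ≤ ‖w‖ * ‖φt‖ + ‖φ‖ * ‖wt‖ := by
            rw [← norm_mul, ← norm_mul]; exact norm_sub_le _ _
        _ ≤ ((1 + K) * ‖ρ‖⁻¹ * Real.exp (-ρ.im * x)) * (At * (1 + |ht|) * Real.exp (ρ.im * x))
            + (A * (1 + |h|) * Real.exp (ρ.im * x))
              * ((1 + K) * ‖ρ‖⁻¹ * Real.exp (-ρ.im * x)) := by
            gcongr
        _ = ((1 + K) * (At * (1 + |ht|)) + A * (1 + |h|) * (1 + K)) * ‖ρ‖⁻¹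
            * (Real.exp (-ρ.im * x) * Real.exp (ρ.im * x)) := by ring
        _ = _ := by rw [e1, mul_one]
  -- a single point far up the imaginary axis; `K < r` keeps `Φ` and `Φ̃` away from zero
  set r := max R (K + 1) with hr
  have hr0 : 0 < r := lt_of_lt_of_le (by linarith) (le_max_left _ _)
  have hrK : K < r := lt_of_lt_of_le (by linarith) (le_max_right _ _)
  set ρ : ℂ := r * I with hρ
  have hn : ‖ρ‖ = r := by simp [hρ, abs_of_pos hr0]
  have hargρ : arg ρ ∈ Icc δ (Real.pi - δ) := by
    rw [hρ, Complex.arg_real_mul _ hr0, Complex.arg_I]; constructor <;> linarith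
  have hRρ : R ≤ ‖ρ‖ := by rw [hn]; exact le_max_left _ _
  have hsmall : ∀ x : ℝ, K * (‖ρ‖ ^ 2)⁻¹ * Real.exp (-ρ.im * x)
      < ‖(I * ρ)⁻¹ * Complex.exp (I * ρ * x)‖ := by
    intro x
    rw [norm_free, hn]
    refine mul_lt_mul_of_pos_right ?_ (Real.exp_pos _)
    rw [← div_eq_mul_inv, div_lt_iff₀ (by positivity)]
    have : r⁻¹ * r ^ 2 = r := by field_simp
    rwa [this]
  have near := fun x hx => lt_of_le_of_lt (hΦ ρ hargρ hRρ x hx).1 (hsmall x)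
  have neart := fun x hx => lt_of_le_of_lt (hΦt ρ hargρ hRρ x hx).1 (hsmall x)
  set l : ℂ := ρ ^ 2 with hl
  have pΦ := Prim.comb (M l) (pS l) (pφ l)
  have pΦt := Prim.comb (M l) (pSt l) (pφt l)
  have hne : ∀ x ∈ Icc 0 T, S x l + M l * (C x l + h * S x l) ≠ 0 := by
    intro x hx h0
    have := near x hx
    rw [h0, zero_sub, norm_neg] at this
    exact lt_irrefl _ this
  have W := wronskian hT0 (pφ l).1 (pφ l).2 pΦ.1 pΦ.2
  have Wt := wronskian hT0 (pφt l).1 (pφt l).2 pΦt.1 pΦt.2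
  simp only [hS0, hS'0, hC0, hC'0, sub_self, zero_mul, add_zero] at W
  simp only [hSt0, hSt'0, hCt0, hCt'0, sub_self, zero_mul, add_zero] at Wt
  have cross : EqOn
      (fun x => (S x l + M l * (C x l + h * S x l)) * (Ct x l + ht * St x l))
      (fun x => (C x l + h * S x l) * (St x l + M l * (Ct x l + ht * St x l))) (Icc 0 T) := by
    intro x hx
    have := hzero x hx ρ
    simp only
    linear_combination this
  have cΦ := pΦ.1.continuousOn hT0
  have cΦ' := pΦ.2.continuousOn hT0
  have cΦt := pΦt.1.continuousOn hT0
  have cΦt' := pΦt.2.continuousOn hT0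
  have cφ := (pφ l).1.continuousOn hT0
  have cφ' := (pφ l).2.continuousOn hT0
  have cφt := (pφt l).1.continuousOn hT0
  have cφt' := (pφt l).2.continuousOn hT0
  have cross' := (pΦ.1.mul hT0 (pφt l).1).eqOn hT ((pφ l).1.mul hT0 pΦt.1)
    ((cΦ'.mul cφt).add (cΦ.mul cφt')) ((cφ'.mul cΦt).add (cφ.mul cΦt')) cross
  have hsq : ∀ x ∈ Icc 0 T, (S x l + M l * (C x l + h * S x l)) ^ 2
      = (St x l + M l * (Ct x l + ht * St x l)) ^ 2 := by
    intro x hx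
    have e1 := cross hx
    have e2 := cross' hx
    have e3 := W x hx
    have e4 := Wt x hx
    simp only at e1 e2
    generalize S x l + M l * (C x l + h * S x l) = a at *
    generalize St x l + M l * (Ct x l + ht * St x l) = at' at *
    generalize C x l + h * S x l = p at *
    generalize Ct x l + ht * St x l = pt at *
    generalize S' x l + M l * (C' x l + h * S' x l) = a' at *
    generalize St' x l + M l * (Ct' x l + ht * St' x l) = at'' at *
    generalize C' x l + h * S' x l = p' at *
    generalize Ct' x l + ht * St' x l = pt' at *
    linear_combination (-a ^ 2) * e4 + at' ^ 2 * e3 - a * at' * e2 + (a * at'' + a' * at') * e1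
  have hΦeq : EqOn (fun x => S x l + M l * (C x l + h * S x l))
      (fun x => St x l + M l * (Ct x l + ht * St x l)) (Icc 0 T) := fun x hx =>
    eq_of_sq_eq_of_near (near x hx) (neart x hx) (hsq x hx)
  have hΦeq' := pΦ.1.eqOn hT pΦt.1 cΦ' cΦt' hΦeq
  constructor
  · filter_upwards [pΦ.2.ae_eq hT0 pΦt.2 hΦeq', ae_restrict_mem measurableSet_Icc] with x h1 hx
    have h2 := hΦeq hx
    simp only at h2
    rw [← h2] at h1
    have h3 := mul_right_cancel₀ (hne x hx) h1
    exact_mod_cast sub_left_injective h3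
  · have hφeq : EqOn (fun x => C x l + h * S x l) (fun x => Ct x l + ht * St x l) (Icc 0 T) := by
      intro x hx
      have h1 := cross hx
      have h2 := hΦeq hx
      simp only at h1 h2
      rw [← h2, mul_comm] at h1
      exact (mul_right_cancel₀ (hne x hx) h1).symm
    have h3 := (pφ l).1.eqOn hT (pφt l).1 cφ' cφt' hφeq (left_mem_Icc.2 hT0)
    simpa [hC'0, hS'0, hCt'0, hSt'0] using h3
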